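/- Define the integer sequence a : ℕ → ℤ by a(0) = 0, a(1) = 1, a(2) = 1, a(3) = 5, and a(n+4) = a(n+3) + 3a(n+2) − a(n+1) − a(n) for all n ≥ 0. Then for every integer n ≥ 5, τ(GP(n,2)) = n · a(n)². -/

import Mathlib

open Polynomial

/-- The defining relation for the generalized Petersen graph `GP(n,k)`:
`u_i ~ u_{i+1}`, `u_i ~ v_i`, `v_i ~ v_{i+k}` (indices mod `n`);
`Sum.inl i` is the outer vertex `u_i`, `Sum.inr i` the inner vertex `v_i`. -/
def gpRel (n k : ℕ) : (ZMod n ⊕ ZMod n) → (ZMod n ⊕ ZMod n) → Prop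
  | Sum.inl i, Sum.inl j => j = i + 1
  | Sum.inl i, Sum.inr j => j = i
  | Sum.inr _, Sum.inl _ => False
  | Sum.inr i, Sum.inr j => j = i + (k : ZMod n)

instance (n k : ℕ) : DecidableRel (gpRel n k) := fun a b =>
  match a, b with
  | Sum.inl i, Sum.inl j => inferInstanceAs (Decidable (j = i + 1))
  | Sum.inl i, Sum.inr j => inferInstanceAs (Decidable (j = i))
  | Sum.inr _, Sum.inl _ => inferInstanceAs (Decidable False)
  | Sum.inr i, Sum.inr j => inferInstanceAs (Decidable (j = i + (k : ZMod n)))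

/-- The generalized Petersen graph `GP(n,k)`. -/
def genPetersen (n k : ℕ) : SimpleGraph (ZMod n ⊕ ZMod n) :=
  SimpleGraph.fromRel (gpRel n k)

instance (n k : ℕ) : DecidableRel (genPetersen n k).Adj := fun a b =>
  inferInstanceAs (Decidable (a ≠ b ∧ (gpRel n k a b ∨ gpRel n k b a)))

/-- The number of spanning trees of a graph `G`: the number of subgraphs that
contain all vertices and are trees. -/
noncomputable def numSpanningTrees {V : Type*} (G : SimpleGraph V) : ℕ :=
  Nat.card {H : G.Subgraph // H.IsSpanning ∧ H.coe.IsTree}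

/-!
Expanding the determinant of `L + e_r e_rᵀ`, with `L` a graph Laplacian, multilinearly in the rows
picks one arc out of every vertex, and such a choice contributes `1` if it leads every vertex to the
root `r` and `0` if it contains a cycle; this is the matrix-tree theorem. As `L` annihilates
constants on both sides, `e_r e_rᵀ` may be exchanged for any rank-one matrix `u wᵀ` at the cost of
the factor `(∑ u) (∑ w)`.

For `GP(n,2)` all blocks of `L` are polynomials in `W = T + T⁻¹`, where `T` is the cyclic shift. The
Schur complement `(3 - (W² - 2)) (3 - W) - 1` equals `(7 + W - W²) (2 - W)`, and a suitable rank-one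
term on the outer rim only regularizes the singular factor `2 - W`, to determinant `n⁴`. If
`α + β = φ`, `γ + δ = ψ` (the golden ratio and its conjugate) and `α β = γ δ = -1`, then
`W² - W - 7` has the roots `-(α γ + β δ)` and `-(α δ + β γ)`, which makes `det (7 + W - W²)` the
square of `αⁿ + βⁿ - γⁿ - δⁿ`. This sequence satisfies the recurrence of `a` and equals `√5 a n`.
-/

open Matrix

section ParentMaps

variable {V : Type*}

/-- A *parent map* `g : V → Option V` sends each vertex to its parent, a root being sent to `none`.
`IsParentOf g w v` says that `w` is the parent of `v`; it is well founded exactly when iterating `g`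
from any vertex reaches a root. -/
def IsParentOf (g : V → Option V) (w v : V) : Prop := g v = some w

lemma acc_isParentOf_iff {g : V → Option V} {v w : V} (h : g v = some w) :
    Acc (IsParentOf g) v ↔ Acc (IsParentOf g) w :=
  ⟨fun hv => hv.inv h, fun hw => ⟨_, fun _ hx => Option.some_injective _ (h.symm.trans hx) ▸ hw⟩⟩

variable (R : Type*) [CommRing R] [DecidableEq V]

/-- The contribution to row `v` of a Laplacian of one arc out of `v`: the arc to `w` contributes
`e_v - e_w`, and the arc `none`, which leaves the graph, contributes `e_v`. -/
def parentRow (v : V) (o : Option V) : V → R :=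
  Pi.single v 1 - o.elim 0 fun w => Pi.single w 1

/-- The Laplacian of the directed graph, possibly with cycles, in which the only arc out of `v` is
`g v`. -/
def parentMatrix (g : V → Option V) : Matrix V V R :=
  Matrix.of fun v => parentRow R v (g v)

variable {R}

lemma parentMatrix_apply_of_not_isParentOf {g : V → Option V} {v w : V} (h : ¬ IsParentOf g w v) :
    parentMatrix R g v w = (1 : Matrix V V R) v w := by
  cases hg : g v with
  | none => simp [parentMatrix, parentRow, hg, Matrix.one_apply, Pi.single_apply, eq_comm]
  | some u =>
    have hwu : w ≠ u := by rintro rfl; exact h hg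
    simp [parentMatrix, parentRow, hg, Matrix.one_apply, Pi.single_apply, eq_comm, hwu]

variable [Fintype V]

lemma parentMatrix_mulVec (g : V → Option V) (x : V → R) (v : V) :
    (parentMatrix R g *ᵥ x) v = x v - (g v).elim 0 x := by
  change parentRow R v (g v) ⬝ᵥ x = _
  rw [parentRow, sub_dotProduct]
  cases g v <;> simp

lemma det_parentMatrix_of_wellFounded {g : V → Option V} (h : WellFounded (IsParentOf g)) :
    (parentMatrix R g).det = 1 := by
  have : IsWellFounded V (IsParentOf g) := ⟨h⟩
  let depth : V → Ordinalᵒᵈ := fun v => OrderDual.toDual (IsWellFounded.rank (IsParentOf g) v)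
  have not_parent {v w : V} (hvw : depth w ≤ depth v) : ¬ IsParentOf g w v := fun hp =>
    (IsWellFounded.rank_lt_of_rel hp).not_ge hvw
  have triangular : (parentMatrix R g).BlockTriangular depth := fun v w hwv => by
    rw [parentMatrix_apply_of_not_isParentOf (not_parent hwv.le), Matrix.one_apply_ne]
    rintro rfl
    exact hwv.false
  have diagonal_block (d : Ordinalᵒᵈ) : (parentMatrix R g).toSquareBlock depth d = 1 := by
    ext ⟨v, hv⟩ ⟨w, hw⟩
    rw [Matrix.toSquareBlock_def, Matrix.of_apply,
      parentMatrix_apply_of_not_isParentOf (not_parent (hw.trans hv.symm).le)]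
    simp [Matrix.one_apply]
  rw [triangular.det]
  exact Finset.prod_eq_one fun d _ => by rw [diagonal_block, Matrix.det_one]

-- The indicator of the vertices that never reach a root lies in the kernel.
lemma det_parentMatrix_of_not_wellFounded {g : V → Option V}
    (h : ¬ WellFounded (IsParentOf g)) : (parentMatrix R g).det = 0 := by
  classical
  obtain ⟨v, hv⟩ : ∃ v, ¬ Acc (IsParentOf g) v := by
    by_contra! hacc
    exact h ⟨hacc⟩
  let x : V → R := fun v => if Acc (IsParentOf g) v then 0 else 1
  have hx : parentMatrix R g *ᵥ x = 0 := by
    ext v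
    rw [parentMatrix_mulVec]
    cases hg : g v with
    | none =>
      have hacc : Acc (IsParentOf g) v := ⟨_, fun w hw => by simp [IsParentOf, hg] at hw⟩
      simp [x, hacc]
    | some w => simp [x, acc_isParentOf_iff hg]
  exact Matrix.det_eq_zero_of_mulVec_eq_zero_of_mem_nonZeroDivisors hx (i := v)
    (by simp [x, hv])

open Classical in
lemma det_sum_parentRow (c : V → Finset (Option V)) :
    (Matrix.of fun v => ∑ o ∈ c v, parentRow R v o).det =
      ({g ∈ Fintype.piFinset c | WellFounded (IsParentOf g)} : Finset (V → Option V)).card := by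
  have expansion : (Matrix.of fun v => ∑ o ∈ c v, parentRow R v o).det =
      ∑ g ∈ Fintype.piFinset c, (parentMatrix R g).det :=
    (Matrix.detRowAlternating (n := V) (R := R)).toMultilinearMap.map_sum_finset (parentRow R) c
  rw [expansion, ← Finset.sum_boole]
  refine Finset.sum_congr rfl fun g _ => ?_
  split_ifs with h
  · exact det_parentMatrix_of_wellFounded h
  · exact det_parentMatrix_of_not_wellFounded h

end ParentMaps

section RootedTrees

variable {V : Type*} {G H : SimpleGraph V} {r v w : V} {g : V → Option V}

/-- `g` moves along edges of `G` and eventually leads every vertex to the root `r`. These are the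
spanning trees of `G`, oriented towards `r`. -/
structure IsRootedParentMap (G : SimpleGraph V) (r : V) (g : V → Option V) : Prop where
  adj ⦃v w : V⦄ : g v = some w → G.Adj v w
  eq_root ⦃v : V⦄ : g v = none → v = r
  wellFounded : WellFounded (IsParentOf g)

/-- The undirected graph whose edges join each vertex to its parent. -/
def parentGraph (g : V → Option V) : SimpleGraph V :=
  SimpleGraph.fromRel (IsParentOf g)

lemma eq_some_or_eq_some_of_parentGraph_adj (h : (parentGraph g).Adj v w) :
    g w = some v ∨ g v = some w :=
  ((SimpleGraph.fromRel_adj _ _ _).1 h).2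

namespace IsRootedParentMap

lemma parentGraph_adj (hg : IsRootedParentMap G r g) (h : g v = some w) :
    (parentGraph g).Adj v w :=
  (SimpleGraph.fromRel_adj _ _ _).2 ⟨(hg.adj h).ne, Or.inr h⟩

lemma parentGraph_le (hg : IsRootedParentMap G r g) : parentGraph g ≤ G := fun _ _ hvw =>
  (eq_some_or_eq_some_of_parentGraph_adj hvw).elim (fun h => (hg.adj h).symm) fun h => hg.adj h

lemma mono (hg : IsRootedParentMap H r g) (h : H ≤ G) : IsRootedParentMap G r g where
  adj _ _ hvw := h (hg.adj hvw)
  eq_root := hg.eq_root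
  wellFounded := hg.wellFounded

lemma apply_root (hg : IsRootedParentMap G r g) : g r = none := by
  obtain ⟨v, -, hv⟩ := hg.wellFounded.has_min Set.univ ⟨r, trivial⟩
  have hnone : g v = none := Option.eq_none_iff_forall_ne_some.2 fun w hw => hv w trivial hw
  rwa [← hg.eq_root hnone]

lemma parentGraph_connected (hg : IsRootedParentMap G r g) : (parentGraph g).Connected := by
  have reachable_root (v : V) : (parentGraph g).Reachable v r := by
    induction v using hg.wellFounded.induction with
    | _ v ih =>
      cases h : g v with
      | none => rw [hg.eq_root h]
      | some w => exact (hg.parentGraph_adj h).reachable.trans (ih w h)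
  exact (SimpleGraph.connected_iff _).2
    ⟨fun v w => (reachable_root v).trans (reachable_root w).symm, ⟨r⟩⟩

lemma edgeSet_parentGraph_subset (hg : IsRootedParentMap G r g) :
    (parentGraph g).edgeSet ⊆ (fun v => s(v, (g v).getD r)) '' {r}ᶜ := by
  have ne_root {v w : V} (h : g v = some w) : v ≠ r := by
    rintro rfl
    simp [hg.apply_root] at h
  rintro ⟨v, w⟩ hvw
  rcases eq_some_or_eq_some_of_parentGraph_adj hvw with h | h
  · exact ⟨w, ne_root h, by simp [h, Sym2.eq_swap]⟩
  · exact ⟨v, ne_root h, by simp [h]⟩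

lemma parentGraph_isTree [Finite V] (hg : IsRootedParentMap G r g) :
    (parentGraph g).IsTree := by
  have card_edgeSet_le : (parentGraph g).edgeSet.ncard ≤ ({r}ᶜ : Set V).ncard :=
    (Set.ncard_le_ncard hg.edgeSet_parentGraph_subset).trans (Set.ncard_image_le)
  have card_compl_root := Set.ncard_add_ncard_compl ({r} : Set V)
  rw [Set.ncard_singleton] at card_compl_root
  refine SimpleGraph.isTree_iff_connected_and_card.2 ⟨hg.parentGraph_connected,
    le_antisymm ?_ hg.parentGraph_connected.card_vert_le_card_edgeSet_add_one⟩
  rw [Nat.card_coe_set_eq]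
  lia

lemma eq_of_parentGraph_eq {g' : V → Option V} (hg : IsRootedParentMap G r g)
    (hg' : IsRootedParentMap G r g') (h : parentGraph g = parentGraph g') : g = g' := by
  funext v
  induction v using hg.wellFounded.induction with
  | _ v ih =>
    cases hv : g v with
    | none => rw [hg.eq_root hv, hg'.apply_root]
    | some w =>
      rcases eq_some_or_eq_some_of_parentGraph_adj (h ▸ hg.parentGraph_adj hv) with hw | hw
      · exact absurd hv (hg.wellFounded.asymmetric _ _ ((ih w hv).trans hw))
      · exact hw.symm

end IsRootedParentMap

lemma exists_adj_dist_lt (hvr : G.Reachable v r) (hv : v ≠ r) :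
    ∃ w, G.Adj v w ∧ G.dist w r < G.dist v r := by
  obtain ⟨p, hp⟩ := hvr.exists_walk_length_eq_dist
  cases p with
  | nil => exact absurd rfl hv
  | cons hvw q => exact ⟨_, hvw, hp ▸ (Nat.lt_succ_of_le (SimpleGraph.dist_le q))⟩

lemma exists_isRootedParentMap (hG : G.Connected) (r : V) :
    ∃ g, IsRootedParentMap G r g := by
  classical
  choose! next next_adj dist_next_lt using fun v (hv : v ≠ r) => exists_adj_dist_lt (hG v r) hv
  let g : V → Option V := fun v => if v = r then none else some (next v)
  have eq_next {v w : V} (h : g v = some w) : v ≠ r ∧ next v = w := by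
    simpa [g] using h
  refine ⟨g, fun v w h => ?_, fun v h => by simpa [g] using h,
    Subrelation.wf (fun {w v} h => ?_) (measure fun v => G.dist v r).wf⟩
  · obtain ⟨hv, rfl⟩ := eq_next h
    exact next_adj v hv
  · obtain ⟨hv, rfl⟩ := eq_next h
    exact dist_next_lt v hv

lemma exists_parentGraph_eq [Finite V] (hHG : H ≤ G) (hH : H.IsTree) (r : V) :
    ∃ g, IsRootedParentMap G r g ∧ parentGraph g = H := by
  obtain ⟨g, hg⟩ := exists_isRootedParentMap hH.connected r
  exact ⟨g, hg.mono hHG, (SimpleGraph.isTree_iff_minimal_connected.1 hH).eq_of_le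
    hg.parentGraph_connected hg.parentGraph_le⟩

lemma numSpanningTrees_eq_card_isTree (G : SimpleGraph V) :
    numSpanningTrees G = Nat.card {H : SimpleGraph V // H ≤ G ∧ H.IsTree} :=
  Nat.card_congr
    { toFun T := ⟨T.1.spanningCoe, T.1.spanningCoe_le,
        (T.1.spanningCoeEquivCoeOfSpanning T.2.1).isTree_iff.2 T.2.2⟩
      invFun H := ⟨SimpleGraph.toSubgraph H.1 H.2.1, SimpleGraph.toSubgraph.isSpanning _ _,
        ((SimpleGraph.toSubgraph H.1 H.2.1).spanningCoeEquivCoeOfSpanning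
          (SimpleGraph.toSubgraph.isSpanning _ _)).isTree_iff.1 H.2.2⟩
      left_inv T := Subtype.ext <|
        SimpleGraph.Subgraph.ext (SimpleGraph.Subgraph.isSpanning_iff.1 T.2.1).symm rfl
      right_inv _ := rfl }

theorem card_isRootedParentMap [Finite V] (G : SimpleGraph V) (r : V) :
    Nat.card {g // IsRootedParentMap G r g} = numSpanningTrees G := by
  rw [numSpanningTrees_eq_card_isTree]
  refine Nat.card_congr <| Equiv.ofBijective
    (fun g => ⟨parentGraph g.1, g.2.parentGraph_le, g.2.parentGraph_isTree⟩) ⟨?_, ?_⟩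
  · rintro ⟨g, hg⟩ ⟨g', hg'⟩ h
    exact Subtype.ext (hg.eq_of_parentGraph_eq hg' (congrArg Subtype.val h))
  · rintro ⟨H, hHG, hH⟩
    obtain ⟨g, hg, rfl⟩ := exists_parentGraph_eq hHG hH r
    exact ⟨⟨g, hg⟩, rfl⟩

end RootedTrees

section MatrixTree

variable {V R : Type*} [Fintype V] [DecidableEq V] [CommRing R]

lemma lapMatrix_row (G : SimpleGraph V) [DecidableRel G.Adj] (v : V) :
    (G.lapMatrix R : Matrix V V R) v = ∑ w with G.Adj v w, parentRow R v (some w) := by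
  have degree_sum : ∑ w with G.Adj v w, (Pi.single v 1 : V → R) = Pi.single v (G.degree v : R) := by
    rw [Finset.sum_const, ← G.neighborFinset_eq_filter, G.card_neighborFinset_eq_degree,
      ← Pi.single_smul, nsmul_one]
  have adj_sum : ∑ w with G.Adj v w, (Pi.single w 1 : V → R) = G.adjMatrix R v := by
    ext x
    simp [Finset.sum_apply, Pi.single_apply, SimpleGraph.adjMatrix_apply]
  simp only [parentRow, Option.elim_some, Finset.sum_sub_distrib, degree_sum, adj_sum]
  ext x
  simp [SimpleGraph.lapMatrix, SimpleGraph.degMatrix, diagonal_apply, Pi.single_apply, eq_comm]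

lemma lapMatrix_add_vecMulVec_single_row (G : SimpleGraph V) [DecidableRel G.Adj] (r v : V) :
    (G.lapMatrix R + vecMulVec (Pi.single r 1) (Pi.single r 1) : Matrix V V R) v =
      ∑ o : Option V with (∀ w, o = some w → G.Adj v w) ∧ (o = none → v = r),
        parentRow R v o := by
  have single_row : (vecMulVec (Pi.single r 1) (Pi.single r 1) : Matrix V V R) v =
      if v = r then parentRow R v none else 0 := by
    ext w
    by_cases hv : v = r <;> simp [vecMulVec_apply, parentRow, hv]
  rw [Finset.sum_filter, Fintype.sum_option, add_comm (G.lapMatrix R)]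
  change (vecMulVec _ _ : Matrix V V R) v + G.lapMatrix R v = _
  rw [single_row, lapMatrix_row, Finset.sum_filter]
  simp

theorem det_lapMatrix_add_vecMulVec_single (G : SimpleGraph V) [DecidableRel G.Adj] (r : V) :
    (G.lapMatrix R + vecMulVec (Pi.single r 1) (Pi.single r 1) : Matrix V V R).det =
      (numSpanningTrees G : R) := by
  classical
  have rows : (G.lapMatrix R + vecMulVec (Pi.single r 1) (Pi.single r 1) : Matrix V V R) =
      Matrix.of fun v => ∑ o : Option V with
        (∀ w, o = some w → G.Adj v w) ∧ (o = none → v = r), parentRow R v o :=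
    funext (lapMatrix_add_vecMulVec_single_row G r)
  rw [rows, det_sum_parentRow, ← card_isRootedParentMap G r, Nat.card_eq_fintype_card,
    Fintype.card_subtype]
  congr 2
  ext g
  simp only [Finset.mem_filter, Fintype.mem_piFinset, Finset.mem_univ, true_and]
  exact ⟨fun h => ⟨fun v w => (h.1 v).1 w, fun v => (h.1 v).2, h.2⟩,
    fun h => ⟨fun v => ⟨fun w hw => h.adj hw, fun hv => h.eq_root hv⟩, h.wellFounded⟩⟩

lemma det_add_vecMulVec_of_sum_eq_one {M : Matrix V V R} (hrow : M *ᵥ 1 = 0) (hcol : 1 ᵥ* M = 0)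
    {x y : V → R} (hx : ∑ v, x v = 1) (hy : ∑ v, y v = 1) (u w : V → R) :
    (M + vecMulVec u w).det = (∑ v, u v) * (∑ v, w v) * (M + vecMulVec x y).det := by
  have det_one_add {z : V → R} (hz : ∑ v, z v = 1) (u : V → R) :
      (1 + vecMulVec (u - z) (1 : V → R)).det = ∑ v, u v := by
    rw [vecMulVec_eq Unit, det_one_add_replicateCol_mul_replicateRow, one_dotProduct]
    simp [hz]
  have one_add_mulVec {z : V → R} (hz : ∑ v, z v = 1) (u : V → R) :
      (1 + vecMulVec (u - z) (1 : V → R)) *ᵥ z = u := by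
    rw [add_mulVec, vecMulVec_mulVec, one_dotProduct, hz]
    simp
  have factorization : M + vecMulVec u w =
      (1 + vecMulVec (u - x) 1) * (M + vecMulVec x y) * (1 + vecMulVec (w - y) 1)ᵀ := by
    rw [mul_add, add_mul, mul_vecMulVec, vecMulVec_mul, vecMul_transpose, one_add_mulVec hx,
      one_add_mulVec hy, transpose_add, transpose_vecMulVec, add_mul, mul_add, vecMulVec_mul, hcol,
      mul_vecMulVec]
    simp [hrow]
  rw [factorization, det_mul, det_mul, det_transpose, det_one_add hx, det_one_add hy]
  ring

theorem det_lapMatrix_add_vecMulVec [Nonempty V] (G : SimpleGraph V) [DecidableRel G.Adj]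
    (u w : V → R) :
    (G.lapMatrix R + vecMulVec u w).det = (∑ v, u v) * (∑ v, w v) * numSpanningTrees G := by
  obtain ⟨r⟩ := ‹Nonempty V›
  have row_sum : G.lapMatrix R *ᵥ 1 = 0 := SimpleGraph.lapMatrix_mulVec_const_eq_zero (R := R) G
  have col_sum : 1 ᵥ* G.lapMatrix R = 0 := by
    rw [← mulVec_transpose, (G.isSymm_lapMatrix R).eq, row_sum]
  rw [det_add_vecMulVec_of_sum_eq_one row_sum col_sum (x := Pi.single r 1) (y := Pi.single r 1)
    (by simp) (by simp), det_lapMatrix_add_vecMulVec_single]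

end MatrixTree

lemma det_fromBlocks_neg_one_neg_one {m R : Type*} [Fintype m] [DecidableEq m] [CommRing R]
    (A D : Matrix m m R) : (fromBlocks A (-1) (-1) D).det = (D * A - 1).det := by
  have shear : fromBlocks A (-1) (-1) D * fromBlocks 1 0 (A - 1) 1 =
      fromBlocks 1 (-1) (D * A - D - 1) D := by
    rw [fromBlocks_multiply]
    congr 1 <;> noncomm_ring
  calc (fromBlocks A (-1) (-1) D).det
    _ = (fromBlocks A (-1) (-1) D * fromBlocks 1 0 (A - 1) 1).det := by simp
    _ = (D * A - 1).det := by
      rw [shear, det_fromBlocks_one₁₁]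
      congr 1
      noncomm_ring

section Translation

variable {A R : Type*} [AddCommGroup A] [DecidableEq A] [CommRing R]

variable (R) in
/-- The operator `x ↦ x (· + a)` on functions on `A`. -/
def translationMatrix (a : A) : Matrix A A R := (Equiv.addRight a).permMatrix R

variable (R) in
/-- The adjacency matrix of the Cayley graph of `A` with generators `a` and `-a`, in which the edges
are doubled if `2a = 0`. -/
def cayleyMatrix (a : A) : Matrix A A R := translationMatrix R a + translationMatrix R (-a)

lemma translationMatrix_apply (a i j : A) :
    translationMatrix R a i j = if i + a = j then 1 else 0 := by
  simp [translationMatrix, Equiv.Perm.permMatrix, PEquiv.toMatrix_apply, eq_comm]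

lemma translationMatrix_zero : translationMatrix R (0 : A) = 1 := by
  simp [translationMatrix]

lemma transpose_translationMatrix (a : A) :
    (translationMatrix R a)ᵀ = translationMatrix R (-a) := by
  simp [translationMatrix]

variable [Fintype A]

lemma translationMatrix_mul (a b : A) :
    translationMatrix R a * translationMatrix R b = translationMatrix R (a + b) := by
  rw [translationMatrix, translationMatrix, ← permMatrix_mul, translationMatrix]
  congr 1
  ext x
  simp [add_assoc]

lemma translationMatrix_mul_neg (a : A) :
    translationMatrix R a * translationMatrix R (-a) = 1 := by
  rw [translationMatrix_mul, add_neg_cancel, translationMatrix_zero]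

lemma translationMatrix_mulVec_one (a : A) : translationMatrix R a *ᵥ 1 = 1 := by
  rw [translationMatrix, permMatrix_mulVec]
  rfl

lemma one_sub_translationMatrix_mulVec_one (a : A) : (1 - translationMatrix R a) *ᵥ 1 = 0 := by
  rw [sub_mulVec, one_mulVec, translationMatrix_mulVec_one, sub_self]

lemma one_vecMul_translationMatrix (a : A) : 1 ᵥ* translationMatrix R a = 1 := by
  rw [← mulVec_transpose, transpose_translationMatrix, translationMatrix_mulVec_one]

lemma cayleyMatrix_mulVec_one (a : A) : cayleyMatrix R a *ᵥ 1 = (2 : R) • 1 := by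
  rw [cayleyMatrix, add_mulVec, translationMatrix_mulVec_one, translationMatrix_mulVec_one,
    two_smul]

lemma cayleyMatrix_two_nsmul (a : A) :
    cayleyMatrix R (2 • a) = cayleyMatrix R a ^ 2 - (2 : R) • 1 := by
  have mul_neg_cancel := translationMatrix_mul_neg (R := R) a
  have neg_mul_cancel := translationMatrix_mul_neg (R := R) (-a)
  rw [neg_neg] at neg_mul_cancel
  rw [cayleyMatrix, cayleyMatrix, two_nsmul, neg_add, ← translationMatrix_mul,
    ← translationMatrix_mul, sq, mul_add, add_mul, add_mul, mul_neg_cancel,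
    neg_mul_cancel, two_smul]
  abel

lemma smul_one_sub_translationMatrix_mul_transpose (r : R) (a : A) :
    (r • 1 - translationMatrix R a) * (r • 1 - translationMatrix R a)ᵀ =
      (r ^ 2 + 1) • 1 - r • cayleyMatrix R a := by
  simp only [transpose_sub, transpose_smul, transpose_one, transpose_translationMatrix, mul_sub,
    sub_mul, smul_mul_assoc, mul_smul_comm, mul_one, one_mul,
    translationMatrix_mul_neg, cayleyMatrix]
  module

end Translation

section Cyclic

variable {n : ℕ} {R : Type*} [CommRing R]

lemma fin_add_one_eq_succ_iff (i : Fin (n + 2)) (j : Fin (n + 1)) :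
    i + 1 = j.succ ↔ (i : ℕ) = j := by
  rw [Fin.ext_iff, Fin.val_add_one, Fin.val_succ]
  split_ifs with hi
  · simp only [hi, Fin.val_last]
    lia
  · lia

-- Expand along column `0`, whose two cofactors are triangular.
lemma det_eq_prod_sub_prod_of_cyclic_bidiagonal {d e : Fin (n + 1) → R}
    {M : Matrix (Fin (n + 1)) (Fin (n + 1)) R}
    (hM : ∀ i j, M i j = (if i = j then d i else 0) - if i + 1 = j then e i else 0) :
    M.det = ∏ i, d i - ∏ i, e i := by
  cases n with
  | zero => simp [hM]
  | succ m =>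
    have upper : (M.submatrix Fin.succ Fin.succ).det = ∏ i : Fin (m + 1), d i.succ := by
      rw [det_of_isUpperTriangular]
      · simp [hM]
      · intro i j (hij : j < i)
        have h_off : (i : ℕ) + 1 ≠ j := by lia
        simp [hM, fin_add_one_eq_succ_iff, hij.ne', h_off]
    have lower : (M.submatrix Fin.castSucc Fin.succ).det =
        ∏ i : Fin (m + 1), -e i.castSucc := by
      rw [det_of_isLowerTriangular]
      · simp [hM, Fin.ext_iff]
      · intro i j (hij : i < j)
        have h_diag : (i : ℕ) ≠ j + 1 := by lia
        have h_off : (i : ℕ) ≠ j := by lia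
        simp [hM, Fin.ext_iff, h_diag, h_off]
    have middle (i : Fin m) : M i.castSucc.succ 0 = 0 := by
      simp [hM, Fin.ext_iff, Fin.val_add_one, i.isLt.ne]
    rw [det_succ_column_zero, Fin.sum_univ_succ, Fin.sum_univ_castSucc]
    simp only [middle, Fin.succ_last, Fin.succAbove_last, Fin.succAbove_zero, upper, lower]
    have top : M 0 0 = d 0 := by simp [hM]
    have corner : M (Fin.last (m + 1)) 0 = -e (Fin.last (m + 1)) := by simp [hM]
    have sign : (-1 : R) ^ (m + 1) * (-1) ^ (m + 1) = 1 := by rw [← mul_pow]; simp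
    rw [top, corner, Fin.prod_univ_succ d, Fin.prod_univ_castSucc e, Finset.prod_neg]
    simp only [Fin.val_zero, Nat.succ_eq_add_one, Fin.val_last, Finset.card_univ,
      Fintype.card_fin, mul_zero, zero_mul, Finset.sum_const_zero]
    linear_combination -(e (Fin.last (m + 1)) * ∏ i : Fin (m + 1), e i.castSucc) * sign

lemma det_diagonal_sub_diagonal_mul_translationMatrix [NeZero n] (d e : ZMod n → R) :
    (diagonal d - diagonal e * translationMatrix R 1).det = ∏ i, d i - ∏ i, e i := by
  have entry (i j : ZMod n) :
      (diagonal d - diagonal e * translationMatrix R 1 : Matrix (ZMod n) (ZMod n) R) i j =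
        (if i = j then d i else 0) - if i + 1 = j then e i else 0 := by
    simp [diagonal_mul, translationMatrix_apply, diagonal_apply]
  obtain ⟨m, rfl⟩ := Nat.exists_eq_succ_of_ne_zero (NeZero.ne n)
  exact det_eq_prod_sub_prod_of_cyclic_bidiagonal entry

lemma det_smul_one_sub_translationMatrix [NeZero n] (r : R) :
    (r • 1 - translationMatrix R (1 : ZMod n)).det = r ^ n - 1 := by
  have h := det_diagonal_sub_diagonal_mul_translationMatrix (n := n) (fun _ => r) 1
  rw [← smul_one_eq_diagonal, diagonal_one', one_mul] at h
  simpa using h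

-- The all-ones matrix is exchanged for a rank-one matrix that opens the cycle at one entry.
lemma det_one_sub_translationMatrix_add_vecMulVec_one [NeZero n] :
    (1 - translationMatrix R (1 : ZMod n) + vecMulVec 1 1).det = (n : R) ^ 2 := by
  have col_sum : 1 ᵥ* (1 - translationMatrix R (1 : ZMod n)) = 0 := by
    rw [vecMul_sub, vecMul_one, one_vecMul_translationMatrix, sub_self]
  have cut : 1 - translationMatrix R (1 : ZMod n) + vecMulVec (Pi.single (-1) 1) (Pi.single 0 1) =
      diagonal 1 - diagonal (1 - Pi.single (-1) 1) * translationMatrix R 1 := by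
    ext i j
    by_cases hi : i = -1 <;>
      simp [hi, vecMulVec_apply, translationMatrix_apply, diagonal_mul, Pi.single_apply, eq_comm]
  have vanishing : ∏ i : ZMod n, (1 - Pi.single (-1) 1 : ZMod n → R) i = 0 :=
    Finset.prod_eq_zero (Finset.mem_univ (-1)) (by simp)
  rw [det_add_vecMulVec_of_sum_eq_one (one_sub_translationMatrix_mulVec_one 1) col_sum
    (x := Pi.single (-1) 1) (y := Pi.single 0 1) (by simp) (by simp), cut,
    det_diagonal_sub_diagonal_mul_translationMatrix, vanishing]
  simp [sq]

lemma det_two_sub_cayleyMatrix_add_vecMulVec_one [NeZero n] :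
    ((2 : R) • 1 - cayleyMatrix R (1 : ZMod n) + (n : R) • vecMulVec 1 1).det = (n : R) ^ 4 := by
  have square := smul_one_sub_translationMatrix_mul_transpose (1 : R) (1 : ZMod n)
  rw [one_smul, one_pow, one_add_one_eq_two, one_smul] at square
  have factorization : (2 : R) • 1 - cayleyMatrix R (1 : ZMod n) + (n : R) • vecMulVec 1 1 =
      (1 - translationMatrix R 1 + vecMulVec 1 1) *
        (1 - translationMatrix R 1 + vecMulVec 1 1)ᵀ := by
    rw [← square, transpose_add, transpose_vecMulVec, add_mul, mul_add, mul_add, mul_vecMulVec,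
      vecMulVec_mul, vecMul_transpose, one_sub_translationMatrix_mulVec_one,
      vecMulVec_mul_vecMulVec, one_dotProduct_one, ZMod.card, zero_vecMulVec, vecMulVec_zero,
      add_zero, zero_add, vecMulVec_smul]
  rw [factorization, det_mul, det_transpose, det_one_sub_translationMatrix_add_vecMulVec_one]
  ring

lemma det_add_smul_one_sub_cayleyMatrix [NeZero n] {r s : R} (hrs : r * s = 1) :
    ((r + s) • 1 - cayleyMatrix R (1 : ZMod n)).det = r ^ n + s ^ n - 2 := by
  have factorization : (r + s) • 1 - cayleyMatrix R (1 : ZMod n) =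
      s • ((r • 1 - translationMatrix R 1) * (r • 1 - translationMatrix R 1)ᵀ) := by
    rw [smul_one_sub_translationMatrix_mul_transpose, smul_sub, smul_smul, smul_smul, mul_comm s r,
      hrs, one_smul]
    congr 2
    linear_combination -r * hrs
  have hrs_pow : r ^ n * s ^ n = 1 := by rw [← mul_pow, hrs, one_pow]
  rw [factorization, det_smul, det_mul, det_transpose, det_smul_one_sub_translationMatrix,
    ZMod.card]
  linear_combination (r ^ n - 2) * hrs_pow

lemma det_sub_smul_cayleyMatrix_sub_sq [NeZero n] {α β γ δ : R} (hαβ : α * β = -1)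
    (hγδ : γ * δ = -1) :
    ((α ^ 2 + β ^ 2 + γ ^ 2 + δ ^ 2) • 1 - ((α + β) * (γ + δ)) • cayleyMatrix R (1 : ZMod n) -
      cayleyMatrix R (1 : ZMod n) ^ 2).det = (α ^ n + β ^ n - γ ^ n - δ ^ n) ^ 2 := by
  have factorization : (α ^ 2 + β ^ 2 + γ ^ 2 + δ ^ 2) • 1 -
      ((α + β) * (γ + δ)) • cayleyMatrix R (1 : ZMod n) - cayleyMatrix R (1 : ZMod n) ^ 2 =
        ((-(α * γ) + -(β * δ)) • 1 - cayleyMatrix R 1) *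
          -((-(α * δ) + -(β * γ)) • 1 - cayleyMatrix R 1) := by
    have constant_term : (α * γ + β * δ) * (α * δ + β * γ) =
        -(α ^ 2 + β ^ 2 + γ ^ 2 + δ ^ 2) := by
      linear_combination (γ ^ 2 + δ ^ 2) * hαβ + (α ^ 2 + β ^ 2) * hγδ
    simp only [mul_neg, sub_mul, mul_sub, smul_mul_assoc, mul_smul_comm, mul_one, one_mul, sq]
    match_scalars
    · linear_combination constant_term
    · ring
    · ring
  have hαβ_pow : α ^ n * β ^ n = (-1) ^ n := by rw [← mul_pow, hαβ]
  have hγδ_pow : γ ^ n * δ ^ n = (-1) ^ n := by rw [← mul_pow, hγδ]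
  have sign : (-1 : R) ^ n * (-1) ^ n = 1 := by rw [← mul_pow]; simp
  have reciprocal : -(α * γ) * -(β * δ) = 1 := by linear_combination γ * δ * hαβ - hγδ
  have reciprocal' : -(α * δ) * -(β * γ) = 1 := by linear_combination γ * δ * hαβ - hγδ
  rw [factorization, det_mul, det_neg, det_add_smul_one_sub_cayleyMatrix reciprocal,
    det_add_smul_one_sub_cayleyMatrix reciprocal', ZMod.card]
  simp only [neg_pow (_ * _), mul_pow]
  linear_combination
    (((-1) ^ n) ^ 3 * ((γ ^ n) ^ 2 + (δ ^ n) ^ 2) - 2) * hαβ_pow +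
    (((-1) ^ n) ^ 3 * ((α ^ n) ^ 2 + (β ^ n) ^ 2) - 2) * hγδ_pow +
    ((((-1) ^ n) ^ 2 + 1) * ((α ^ n) ^ 2 + (β ^ n) ^ 2 + (γ ^ n) ^ 2 + (δ ^ n) ^ 2) -
      2 * (α ^ n + β ^ n) * (γ ^ n + δ ^ n)) * sign

end Cyclic

section GeneralizedPetersen

variable {n k : ℕ} {R : Type*} [CommRing R]

lemma cayleyMatrix_apply_of_two_nsmul_ne_zero {A : Type*} [AddCommGroup A] [DecidableEq A] {a : A}
    (ha : 2 • a ≠ 0) (i j : A) :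
    cayleyMatrix R a i j = if i ≠ j ∧ (j = i + a ∨ i = j + a) then 1 else 0 := by
  have ha0 : a ≠ 0 := by rintro rfl; simp at ha
  have add_self : a + a ≠ 0 := by rwa [← two_nsmul]
  rw [cayleyMatrix, Matrix.add_apply, translationMatrix_apply, translationMatrix_apply]
  simp only [← sub_eq_add_neg, sub_eq_iff_eq_add]
  by_cases h : i + a = j
  · subst h
    simp [ha0, add_assoc, add_self]
  · by_cases h' : i = j + a
    · subst h'
      simp [ha0, add_assoc, add_self]
    · simp [h, h', Ne.symm h]

lemma adjMatrix_genPetersen (h2 : (2 : ZMod n) ≠ 0) (h2k : (2 * k : ZMod n) ≠ 0) :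
    (genPetersen n k).adjMatrix R =
      fromBlocks (cayleyMatrix R 1) 1 1 (cayleyMatrix R (k : ZMod n)) := by
  ext (i | i) (j | j)
  · rw [SimpleGraph.adjMatrix_apply, fromBlocks_apply₁₁,
      cayleyMatrix_apply_of_two_nsmul_ne_zero (by simpa using h2)]
    simp [genPetersen, gpRel]
  · rw [SimpleGraph.adjMatrix_apply]
    simp [genPetersen, gpRel, one_apply, eq_comm]
  · rw [SimpleGraph.adjMatrix_apply]
    simp [genPetersen, gpRel, one_apply]
  · rw [SimpleGraph.adjMatrix_apply, fromBlocks_apply₂₂,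
      cayleyMatrix_apply_of_two_nsmul_ne_zero (by simpa using h2k)]
    simp [genPetersen, gpRel]

lemma lapMatrix_genPetersen [NeZero n] (h2 : (2 : ZMod n) ≠ 0) (h2k : (2 * k : ZMod n) ≠ 0) :
    (genPetersen n k).lapMatrix R =
      fromBlocks ((3 : R) • 1 - cayleyMatrix R 1) (-1) (-1)
        ((3 : R) • 1 - cayleyMatrix R (k : ZMod n)) := by
  have adjacency := adjMatrix_genPetersen (R := R) h2 h2k
  have degree_eq (x : ZMod n ⊕ ZMod n) : ((genPetersen n k).degree x : R) = 3 := by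
    have h := (genPetersen n k).adjMatrix_mulVec_const_apply (a := (1 : R)) (v := x)
    rw [mul_one, adjacency] at h
    rw [← h]
    cases x <;> simp [fromBlocks_mulVec, cayleyMatrix_mulVec_one] <;> norm_num
  rw [SimpleGraph.lapMatrix, SimpleGraph.degMatrix, adjacency]
  simp only [degree_eq]
  rw [← smul_one_eq_diagonal, ← fromBlocks_one, fromBlocks_smul, sub_eq_add_neg, fromBlocks_neg,
    fromBlocks_add]
  simp only [smul_zero, zero_add, sub_eq_add_neg]

lemma det_lapMatrix_genPetersen_add_vecMulVec [NeZero n] (h2 : (2 : ZMod n) ≠ 0)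
    (h2k : (2 * k : ZMod n) ≠ 0) (c : R) :
    ((genPetersen n k).lapMatrix R + vecMulVec (Sum.elim 1 0) (Sum.elim (c • 1) 0)).det =
      (((3 : R) • 1 - cayleyMatrix R (k : ZMod n)) *
        ((3 : R) • 1 - cayleyMatrix R 1 + c • vecMulVec 1 1) - 1).det := by
  have outer_rank_one : (vecMulVec (Sum.elim 1 0) (Sum.elim (c • 1) 0) :
      Matrix (ZMod n ⊕ ZMod n) (ZMod n ⊕ ZMod n) R) = fromBlocks (c • vecMulVec 1 1) 0 0 0 := by
    ext (i | i) (j | j) <;> simp [vecMulVec_apply]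
  rw [lapMatrix_genPetersen h2 h2k, outer_rank_one, fromBlocks_add, add_zero,
    add_zero, det_fromBlocks_neg_one_neg_one]

variable [NeZero n]

lemma schur_complement_genPetersen_two_eq_mul :
    ((5 : R) • 1 - cayleyMatrix R (1 : ZMod n) ^ 2) *
        ((3 : R) • 1 - cayleyMatrix R 1 + (5 * n : R) • vecMulVec 1 1) - 1 =
      ((7 : R) • 1 + cayleyMatrix R 1 - cayleyMatrix R 1 ^ 2) *
        ((2 : R) • 1 - cayleyMatrix R 1 + (n : R) • vecMulVec 1 1) := by
  set W := cayleyMatrix R (1 : ZMod n)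
  have W_mulVec_one : W *ᵥ 1 = (2 : R) • 1 := cayleyMatrix_mulVec_one 1
  have inner_mulVec_one : ((5 : R) • 1 - W ^ 2) *ᵥ 1 = 1 := by
    simp only [sub_mulVec, smul_mulVec, one_mulVec, sq, ← mulVec_mulVec, W_mulVec_one, mulVec_smul]
    module
  have quotient_mulVec_one : ((7 : R) • 1 + W - W ^ 2) *ᵥ 1 = (5 : R) • 1 := by
    simp only [add_mulVec, sub_mulVec, smul_mulVec, one_mulVec, sq, ← mulVec_mulVec, W_mulVec_one,
      mulVec_smul]
    module
  have product : ((5 : R) • 1 - W ^ 2) * ((3 : R) • 1 - W) - 1 =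
        ((7 : R) • 1 + W - W ^ 2) * ((2 : R) • 1 - W) := by
    simp only [add_mul, sub_mul, mul_sub, smul_mul_assoc, mul_smul_comm, mul_one, one_mul,
      ← pow_succ, ← sq]
    module
  rw [mul_add, mul_add, Matrix.mul_smul, Matrix.mul_smul, mul_vecMulVec, mul_vecMulVec,
    inner_mulVec_one, quotient_mulVec_one, smul_vecMulVec, smul_smul, mul_comm (n : R),
    add_sub_right_comm, product]

theorem five_mul_numSpanningTrees_genPetersen_two [IsDomain R] [CharZero R]
    (h4 : (4 : ZMod n) ≠ 0) :
    5 * (numSpanningTrees (genPetersen n 2) : R) =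
      n * ((7 : R) • 1 + cayleyMatrix R (1 : ZMod n) - cayleyMatrix R 1 ^ 2).det := by
  have h2 : (2 : ZMod n) ≠ 0 := fun h => h4 (by linear_combination 2 * h)
  have h22 : (2 * (2 : ℕ) : ZMod n) ≠ 0 := by norm_num; exact h4
  have inner_block : (3 : R) • 1 - cayleyMatrix R ((2 : ℕ) : ZMod n) =
      (5 : R) • 1 - cayleyMatrix R 1 ^ 2 := by
    rw [show ((2 : ℕ) : ZMod n) = 2 • 1 by simp, cayleyMatrix_two_nsmul]
    module
  have weighted_count := det_lapMatrix_add_vecMulVec (genPetersen n 2) (Sum.elim 1 0)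
    (Sum.elim ((5 * n : R) • 1) 0 : ZMod n ⊕ ZMod n → R)
  rw [det_lapMatrix_genPetersen_add_vecMulVec h2 h22, inner_block,
    schur_complement_genPetersen_two_eq_mul, det_mul,
    det_two_sub_cayleyMatrix_add_vecMulVec_one] at weighted_count
  simp only [Fintype.sum_sum_type, Sum.elim_inl, Sum.elim_inr, Pi.one_apply, Pi.zero_apply,
    Pi.smul_apply, smul_eq_mul, mul_one, Finset.sum_const, smul_zero, add_zero,
    Finset.card_univ, ZMod.card, nsmul_eq_mul] at weighted_count
  have n_pow_ne_zero : (n : R) ^ 3 ≠ 0 := pow_ne_zero _ (NeZero.ne _)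
  refine mul_left_cancel₀ n_pow_ne_zero ?_
  linear_combination -weighted_count

end GeneralizedPetersen

section Recurrence

/-- The recurrence satisfied by the square root of `τ(GP(n,2)) / n`, coefficients listed from
`a n` up to `a (n + 3)`. -/
def petersenRecurrence (R : Type*) [CommRing R] : LinearRecurrence R where
  order := 4
  coeffs := ![-1, -1, 3, 1]

variable {R : Type*} [CommRing R]

lemma petersenRecurrence_isSolution_iff {u : ℕ → R} :
    (petersenRecurrence R).IsSolution u ↔
      ∀ n, u (n + 4) = u (n + 3) + 3 * u (n + 2) - u (n + 1) - u n := by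
  have unfolded : (petersenRecurrence R).IsSolution u ↔
      ∀ n, u (n + 4) = ∑ i : Fin 4, (![-1, -1, 3, 1] : Fin 4 → R) i * u (n + i) := Iff.rfl
  rw [unfolded]
  refine forall_congr' fun n => ?_
  simp only [Fin.sum_univ_four, Fin.isValue, cons_val_zero, Fin.coe_ofNat_eq_mod, Nat.zero_mod,
    add_zero, neg_mul, one_mul, cons_val_one, Nat.one_mod, cons_val, Nat.reduceMod, Nat.mod_succ]
  constructor <;> intro h <;> linear_combination h

lemma petersenRecurrence_isSolution_pow {x t : R} (hx : x ^ 2 = t * x + 1) (ht : t ^ 2 = t + 1) :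
    (petersenRecurrence R).IsSolution (x ^ ·) :=
  petersenRecurrence_isSolution_iff.2 fun n => by
    linear_combination x ^ n * ((x ^ 2 - 1 + t * x - x) * hx + x ^ 2 * ht)

lemma petersenRecurrence_isSolution_pow_add_pow {α β : R} (hαβ : α * β = -1)
    (hsum : (α + β) ^ 2 = α + β + 1) :
    (petersenRecurrence R).IsSolution (fun n => α ^ n + β ^ n) :=
  (petersenRecurrence R).solSpace.add_mem
    (petersenRecurrence_isSolution_pow (by linear_combination -hαβ) hsum)
    (petersenRecurrence_isSolution_pow (by linear_combination -hαβ) hsum)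

lemma pow_add_pow_sub_pow_sub_pow_eq_mul {a : ℕ → R} (ha : (petersenRecurrence R).IsSolution a)
    (h0 : a 0 = 0) (h1 : a 1 = 1) (h2 : a 2 = 1) (h3 : a 3 = 5) {α β γ δ : R}
    (hαβ : α * β = -1) (hγδ : γ * δ = -1) (hα : (α + β) ^ 2 = α + β + 1)
    (hγ : (γ + δ) ^ 2 = γ + δ + 1) (n : ℕ) :
    α ^ n + β ^ n - γ ^ n - δ ^ n = (α + β - γ - δ) * a n := by
  have sol_left : (petersenRecurrence R).IsSolution
      ((fun n => α ^ n + β ^ n) - fun n => γ ^ n + δ ^ n) := by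
    have sol_αβ := petersenRecurrence_isSolution_pow_add_pow hαβ hα
    have sol_γδ := petersenRecurrence_isSolution_pow_add_pow hγδ hγ
    exact (petersenRecurrence R).solSpace.sub_mem sol_αβ sol_γδ
  have sol_right : (petersenRecurrence R).IsSolution ((α + β - γ - δ) • a) :=
    (petersenRecurrence R).solSpace.smul_mem _ ha
  have eq_of_init : (fun n => α ^ n + β ^ n) - (fun n => γ ^ n + δ ^ n) = (α + β - γ - δ) • a := by
    refine ((petersenRecurrence R).eq_iff_eqOn_range_order _ _ sol_left sol_right).2 fun i hi => ?_
    have i_lt_four : i < 4 := by simpa [petersenRecurrence] using hi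
    simp only [Pi.sub_apply, Pi.smul_apply, smul_eq_mul]
    interval_cases i
    · rw [h0]
      ring
    · rw [h1]
      ring
    · rw [h2]
      linear_combination hα - hγ - 2 * hαβ + 2 * hγδ
    · rw [h3]
      linear_combination (α + β + 1) * hα - (γ + δ + 1) * hγ - 3 * (α + β) * hαβ +
        3 * (γ + δ) * hγδ
  calc α ^ n + β ^ n - γ ^ n - δ ^ n
    _ = α ^ n + β ^ n - (γ ^ n + δ ^ n) := sub_sub _ _ _
    _ = (α + β - γ - δ) * a n := congrFun eq_of_init n

lemma exists_add_eq_and_mul_eq_neg_one (t : ℝ) : ∃ α β : ℝ, α + β = t ∧ α * β = -1 := by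
  have sq_sqrt : √(t ^ 2 + 4) ^ 2 = t ^ 2 + 4 := Real.sq_sqrt (by positivity)
  exact ⟨(t + √(t ^ 2 + 4)) / 2, (t - √(t ^ 2 + 4)) / 2, by ring,
    by linear_combination -sq_sqrt / 4⟩

open scoped goldenRatio in
theorem det_seven_add_cayleyMatrix_sub_sq {a : ℕ → ℝ} (ha : (petersenRecurrence ℝ).IsSolution a)
    (h0 : a 0 = 0) (h1 : a 1 = 1) (h2 : a 2 = 1) (h3 : a 3 = 5) (n : ℕ) [NeZero n] :
    ((7 : ℝ) • 1 + cayleyMatrix ℝ (1 : ZMod n) - cayleyMatrix ℝ 1 ^ 2).det = 5 * a n ^ 2 := by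
  obtain ⟨α, β, hα, hαβ⟩ := exists_add_eq_and_mul_eq_neg_one φ
  obtain ⟨γ, δ, hγ, hγδ⟩ := exists_add_eq_and_mul_eq_neg_one ψ
  have sum_sq : α ^ 2 + β ^ 2 + γ ^ 2 + δ ^ 2 = 7 := by
    have sum_sq_left : α ^ 2 + β ^ 2 = φ + 3 := by
      linear_combination (α + β + φ) * hα + Real.goldenRatio_sq - 2 * hαβ
    have sum_sq_right : γ ^ 2 + δ ^ 2 = ψ + 3 := by
      linear_combination (γ + δ + ψ) * hγ + Real.goldenConj_sq - 2 * hγδ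
    linear_combination sum_sq_left + sum_sq_right + Real.goldenRatio_add_goldenConj
  have sum_mul_sum : (α + β) * (γ + δ) = -1 := by
    rw [hα, hγ, Real.goldenRatio_mul_goldenConj]
  have root_powers : α ^ n + β ^ n - γ ^ n - δ ^ n = √5 * a n := by
    rw [pow_add_pow_sub_pow_sub_pow_eq_mul ha h0 h1 h2 h3 hαβ hγδ
      (by rw [hα, Real.goldenRatio_sq]) (by rw [hγ, Real.goldenConj_sq]), hα, sub_sub, hγ,
      Real.goldenRatio_sub_goldenConj]
  have h := det_sub_smul_cayleyMatrix_sub_sq (n := n) hαβ hγδ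
  rw [sum_sq, sum_mul_sum, neg_one_smul, sub_neg_eq_add, root_powers, mul_pow,
    Real.sq_sqrt (by norm_num)] at h
  exact h

end Recurrence

/-- If `a : ℕ → ℤ` satisfies `a(0) = 0`, `a(1) = 1`, `a(2) = 1`,
`a(3) = 5` and `a(n+4) = a(n+3) + 3a(n+2) − a(n+1) − a(n)`, then for every `n ≥ 5`,
`τ(GP(n,2)) = n·a(n)²`. -/
theorem spanning_trees_GP2_recurrence (a : ℕ → ℤ)
    (h0 : a 0 = 0) (h1 : a 1 = 1) (h2 : a 2 = 1) (h3 : a 3 = 5)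
    (hrec : ∀ n : ℕ, a (n + 4) = a (n + 3) + 3 * a (n + 2) - a (n + 1) - a n) :
    ∀ n : ℕ, 5 ≤ n →
      (numSpanningTrees (genPetersen n 2) : ℤ) = n * a n ^ 2 := by
  intro n hn
  have : NeZero n := ⟨by lia⟩
  have h4 : (4 : ZMod n) ≠ 0 := fun h =>
    absurd (Nat.le_of_dvd (by norm_num) ((ZMod.natCast_eq_zero_iff 4 n).1 (by exact_mod_cast h)))
      (by lia)
  have solution : (petersenRecurrence ℝ).IsSolution (fun n => (a n : ℝ)) :=
    petersenRecurrence_isSolution_iff.2 fun n => by exact_mod_cast hrec n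
  have determinant := det_seven_add_cayleyMatrix_sub_sq solution (by simp [h0]) (by simp [h1])
    (by simp [h2]) (by simp [h3]) n
  have count := five_mul_numSpanningTrees_genPetersen_two (R := ℝ) h4
  rw [determinant] at count
  have real_count : (numSpanningTrees (genPetersen n 2) : ℝ) = n * (a n : ℝ) ^ 2 := by
    linear_combination count / 5
  exact_mod_cast real_count
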